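/- Let θ be a ℂ-algebra automorphism of V = Ǔ^{≥0}_{r,s}(sl_3). Then the generators E_1 and E_2 cannot be exchanged: there exist scalars a_1, a_2, b_1, b_2 ∈ ℂ^* and integers m_1, n_1, m_2, n_2 such that θ(K_l) = a_l K_l and θ(E_l) = b_l K_1^{m_l} K_2^{n_l} E_l for l = 1, 2. -/

import Mathlib

/-!
The proof embeds the algebra `V` into a quantum torus and then argues with units and weights.

*Embedding.* With `E₃ = E₁E₂ - sE₂E₁`, the Serre relations read `E₁E₃ = rE₃E₁` and
`E₃E₂ = rE₂E₃`, so the monomials `K₁ᵐ K₂ⁿ E₂ʲ E₃ᵏ E₁ⁱ` span `V` (`pbwMap_surjective`). In the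
quantum torus on `K₁, K₂, y, x, z` with `xy = r yx`, `zy = s yz`, `zx = (r/s) xz`, the assignment
`E₁ ↦ x + z`, `E₂ ↦ y`, `Kᵢ ↦ Kᵢ` respects the defining relations (`torusGen_rel`) and sends `E₃`
to `(r - s) yx`. Looking at the highest power of `z` shows that the images of the spanning monomials
are linearly independent (`ev_pbwMap_injective`). Hence they form a basis of `V`, and `V` embeds
into the torus.

*Units.* Since sums of exponents behave as in an ordered monoid, the torus has no zero divisors, and
a factor of `1` is a monomial in `K₁, K₂` up to a scalar. The same then holds in `V`
(`V_eq_zero_of_mul`, `V_unit`), so `θ(Kₗ) = aₗ K₁^{mₗ} K₂^{nₗ}`.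

*Weights.* Conjugation by the `K`'s is diagonal in the PBW basis, with eigenvalue determined by the
degree in `ℕ²`. Therefore the monomials of `θ(E₁)`, `θ(E₂)` have degrees whose pairing with
`(m₁, n₁)`, `(m₂, n₂)` reproduces the original weights. Since `ρ` and `σ` are multiplicatively
independent, this is a system of integer equations, whose only solution with nonnegative degrees is
the trivial one (`pairing_rigid`): `θ(Kₗ) = aₗ Kₗ`, and `E₁`, `E₂` are not exchanged.

*Conclusion.* Weight considerations now give `θ(Eₗ) = pₗ Eₗ` and `θ⁻¹(Eₗ) = qₗ Eₗ`; cancelling `Eₗ`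
in `Eₗ = θ(qₗ) pₗ Eₗ` shows that `pₗ` is a unit, hence a scalar multiple of some `K₁ᵐ K₂ⁿ`
(`map_E_of_scale`).
-/

noncomputable section

open FreeAlgebra

/-- The defining relations of the augmented Hopf algebra `Ǔ^{≥0}_{r,s}(sl₃)` (with
`r = ρ³`, `s = σ³`) as a quotient of the free algebra on six generators:
generator `0` is `E₁`, `1` is `E₂`, `2` is `K₁`, `3` is `K₁⁻¹`, `4` is `K₂`, `5` is `K₂⁻¹`. -/
inductive VRel (ρ σ : ℂ) : FreeAlgebra ℂ (Fin 6) → FreeAlgebra ℂ (Fin 6) → Prop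
  | k1inv : VRel ρ σ (ι ℂ (2 : Fin 6) * ι ℂ 3) 1
  | invk1 : VRel ρ σ (ι ℂ (3 : Fin 6) * ι ℂ 2) 1
  | k2inv : VRel ρ σ (ι ℂ (4 : Fin 6) * ι ℂ 5) 1
  | invk2 : VRel ρ σ (ι ℂ (5 : Fin 6) * ι ℂ 4) 1
  | k1k2 : VRel ρ σ (ι ℂ (2 : Fin 6) * ι ℂ 4) (ι ℂ (4 : Fin 6) * ι ℂ 2)
  | k1e1 : VRel ρ σ (ι ℂ (2 : Fin 6) * ι ℂ 0) ((ρ * (σ ^ 2)⁻¹) • (ι ℂ (0 : Fin 6) * ι ℂ 2))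
  | k1e2 : VRel ρ σ (ι ℂ (2 : Fin 6) * ι ℂ 1) ((ρ * σ) • (ι ℂ (1 : Fin 6) * ι ℂ 2))
  | k2e1 : VRel ρ σ (ι ℂ (4 : Fin 6) * ι ℂ 0) ((ρ⁻¹ * σ⁻¹) • (ι ℂ (0 : Fin 6) * ι ℂ 4))
  | k2e2 : VRel ρ σ (ι ℂ (4 : Fin 6) * ι ℂ 1) ((ρ ^ 2 * σ⁻¹) • (ι ℂ (1 : Fin 6) * ι ℂ 4))
  | serre1 : VRel ρ σ
      (ι ℂ (0 : Fin 6) * ι ℂ 0 * ι ℂ 1 - (ρ ^ 3 + σ ^ 3) • (ι ℂ (0 : Fin 6) * ι ℂ 1 * ι ℂ 0)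
        + (ρ ^ 3 * σ ^ 3) • (ι ℂ (1 : Fin 6) * ι ℂ 0 * ι ℂ 0)) 0
  | serre2 : VRel ρ σ
      (ι ℂ (0 : Fin 6) * ι ℂ 1 * ι ℂ 1 - (ρ ^ 3 + σ ^ 3) • (ι ℂ (1 : Fin 6) * ι ℂ 0 * ι ℂ 1)
        + (ρ ^ 3 * σ ^ 3) • (ι ℂ (1 : Fin 6) * ι ℂ 1 * ι ℂ 0)) 0

/-- The augmented Hopf algebra `Ǔ^{≥0}_{r,s}(sl₃)`. -/
abbrev Vsl3 (ρ σ : ℂ) := RingQuot (VRel ρ σ)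

def vE₁ (ρ σ : ℂ) : Vsl3 ρ σ := RingQuot.mkAlgHom ℂ (VRel ρ σ) (ι ℂ 0)
def vE₂ (ρ σ : ℂ) : Vsl3 ρ σ := RingQuot.mkAlgHom ℂ (VRel ρ σ) (ι ℂ 1)
def K₁ (ρ σ : ℂ) : Vsl3 ρ σ := RingQuot.mkAlgHom ℂ (VRel ρ σ) (ι ℂ 2)
def K₁inv (ρ σ : ℂ) : Vsl3 ρ σ := RingQuot.mkAlgHom ℂ (VRel ρ σ) (ι ℂ 3)
def K₂ (ρ σ : ℂ) : Vsl3 ρ σ := RingQuot.mkAlgHom ℂ (VRel ρ σ) (ι ℂ 4)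
def K₂inv (ρ σ : ℂ) : Vsl3 ρ σ := RingQuot.mkAlgHom ℂ (VRel ρ σ) (ι ℂ 5)
def vE₃ (ρ σ : ℂ) : Vsl3 ρ σ := vE₁ ρ σ * vE₂ ρ σ - σ ^ 3 • (vE₂ ρ σ * vE₁ ρ σ)

/-- Integer powers of `K₁`: for negative `m`, `K₁^m` means `(K₁⁻¹)^(-m)`. -/
def K₁z (ρ σ : ℂ) (m : ℤ) : Vsl3 ρ σ :=
  if 0 ≤ m then K₁ ρ σ ^ m.toNat else K₁inv ρ σ ^ (-m).toNat

/-- Integer powers of `K₂`: for negative `n`, `K₂^n` means `(K₂⁻¹)^(-n)`. -/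
def K₂z (ρ σ : ℂ) (n : ℤ) : Vsl3 ρ σ :=
  if 0 ≤ n then K₂ ρ σ ^ n.toNat else K₂inv ρ σ ^ (-n).toNat

/-- The pair of group-like generators `K₁, K₂` as a family indexed by `Fin 2`. -/
def Kvec (ρ σ : ℂ) : Fin 2 → Vsl3 ρ σ := ![K₁ ρ σ, K₂ ρ σ]

/-- The pair of generators `E₁, E₂` as a family indexed by `Fin 2`. -/
def Evec (ρ σ : ℂ) : Fin 2 → Vsl3 ρ σ := ![vE₁ ρ σ, vE₂ ρ σ]

/-! ### The quantum torus -/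

/-- Exponents `(m, n, j, k, i)` of the normally ordered monomials `K₁ᵐ K₂ⁿ yʲ xᵏ zⁱ` of the
quantum torus, and also of the PBW monomials `K₁ᵐ K₂ⁿ E₂ʲ E₃ᵏ E₁ⁱ` of the algebra. -/
abbrev Expo := ℤ × ℤ × ℕ × ℕ × ℕ

/-- Exponent of `ρ` in the scalar that normally orders a product of two torus monomials. -/
def qr (a b : Expo) : ℤ :=
  3 * a.2.2.2.2 * b.2.2.2.1 + 3 * a.2.2.2.1 * b.2.2.1
    - (a.2.2.2.1 + a.2.2.2.2) * (b.1 - b.2.1) - a.2.2.1 * (b.1 + 2 * b.2.1)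

/-- Exponent of `σ` in the scalar that normally orders a product of two torus monomials. -/
def qs (a b : Expo) : ℤ :=
  - 3 * a.2.2.2.2 * b.2.2.2.1 + 3 * a.2.2.2.2 * b.2.2.1
    + (a.2.2.2.1 + a.2.2.2.2) * (2 * b.1 + b.2.1) - a.2.2.1 * (b.1 - b.2.1)

/-- The bicharacter with `Xᵃ Xᵇ = cc a b • Xᵃ⁺ᵇ` for normally ordered torus monomials. It encodes
`xy = r yx`, `zy = s yz`, `zx = (r/s) xz` and the `K`-weights: `x, z` have that of `E₁`, and `y`
that of `E₂`. -/
def cc (ρ σ : ℂ) (a b : Expo) : ℂ := ρ ^ qr a b * σ ^ qs a b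

lemma cc_ne_zero {ρ σ : ℂ} (hρ : ρ ≠ 0) (hσ : σ ≠ 0) (a b : Expo) : cc ρ σ a b ≠ 0 :=
  mul_ne_zero (zpow_ne_zero _ hρ) (zpow_ne_zero _ hσ)

lemma cc_add_left {ρ σ : ℂ} (hρ : ρ ≠ 0) (hσ : σ ≠ 0) (a b w : Expo) :
    cc ρ σ (a + b) w = cc ρ σ a w * cc ρ σ b w := by
  have h1 : qr (a + b) w = qr a w + qr b w := by
    simp only [qr, Prod.fst_add, Prod.snd_add]; push_cast; ring
  have h2 : qs (a + b) w = qs a w + qs b w := by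
    simp only [qs, Prod.fst_add, Prod.snd_add]; push_cast; ring
  simp only [cc, h1, h2, zpow_add₀ hρ, zpow_add₀ hσ]; ring

lemma cc_add_right {ρ σ : ℂ} (hρ : ρ ≠ 0) (hσ : σ ≠ 0) (a b w : Expo) :
    cc ρ σ a (b + w) = cc ρ σ a b * cc ρ σ a w := by
  have h1 : qr a (b + w) = qr a b + qr a w := by
    simp only [qr, Prod.fst_add, Prod.snd_add]; push_cast; ring
  have h2 : qs a (b + w) = qs a b + qs a w := by
    simp only [qs, Prod.fst_add, Prod.snd_add]; push_cast; ring
  simp only [cc, h1, h2, zpow_add₀ hρ, zpow_add₀ hσ]; ring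

/-- The torus monomial with exponent `a`, realized as left multiplication on the space of torus
elements (finitely supported functions on exponents). -/
def tX (ρ σ : ℂ) (a : Expo) : Module.End ℂ (Expo →₀ ℂ) :=
  Finsupp.linearCombination ℂ (fun b => Finsupp.single (a + b) (cc ρ σ a b))

lemma tX_single (ρ σ : ℂ) (a b : Expo) (t : ℂ) :
    tX ρ σ a (Finsupp.single b t) = Finsupp.single (a + b) (t * cc ρ σ a b) := by
  simp [tX, Finsupp.linearCombination_single]

lemma tX_mul {ρ σ : ℂ} (hρ : ρ ≠ 0) (hσ : σ ≠ 0) (a b : Expo) :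
    tX ρ σ a * tX ρ σ b = cc ρ σ a b • tX ρ σ (a + b) := by
  refine Finsupp.lhom_ext fun w t => ?_
  simp only [Module.End.mul_apply, tX_single, LinearMap.smul_apply, Finsupp.smul_single,
    smul_eq_mul, cc_add_left hρ hσ, cc_add_right hρ hσ, add_assoc]
  congr 1; ring

lemma tX_zero (ρ σ : ℂ) : tX ρ σ 0 = 1 := by
  refine Finsupp.lhom_ext fun w t => ?_
  simp [tX_single, cc, qr, qs]

/-- Left multiplication by an arbitrary element of the quantum torus. -/
def tL (ρ σ : ℂ) : (Expo →₀ ℂ) →ₗ[ℂ] Module.End ℂ (Expo →₀ ℂ) :=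
  Finsupp.linearCombination ℂ (tX ρ σ)

lemma tL_single (ρ σ : ℂ) (a : Expo) (t : ℂ) :
    tL ρ σ (Finsupp.single a t) = t • tX ρ σ a := by
  simp [tL, Finsupp.linearCombination_single]

/-- Left multiplication in the torus is multiplicative, that is, the torus product is
associative. -/
lemma tL_mul {ρ σ : ℂ} (hρ : ρ ≠ 0) (hσ : σ ≠ 0) (f g : Expo →₀ ℂ) :
    tL ρ σ f * tL ρ σ g = tL ρ σ (tL ρ σ f g) := by
  induction f using Finsupp.induction_linear with
  | zero => simp
  | add f₁ f₂ h₁ h₂ => simp only [map_add, add_mul, LinearMap.add_apply, h₁, h₂]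
  | single a t =>
    induction g using Finsupp.induction_linear with
    | zero => simp
    | add g₁ g₂ h₁ h₂ => simp only [map_add, mul_add, h₁, h₂]
    | single b u =>
      simp only [tL_single, LinearMap.smul_apply, tX_single, map_smul, smul_mul_assoc,
        mul_smul_comm, tX_mul hρ hσ, smul_smul]
      congr 1; ring

/-- A pair of exponents whose sum is attained only once contributes its product of coefficients. -/
lemma tL_apply_unique (ρ σ : ℂ) (f g : Expo →₀ ℂ) (a b : Expo)
    (h : UniqueAdd f.support g.support a b) :
    tL ρ σ f g (a + b) = f a * g b * cc ρ σ a b := by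
  have h1 : tL ρ σ f g
      = ∑ a' ∈ f.support, ∑ b' ∈ g.support,
        Finsupp.single (a' + b') (f a' * g b' * cc ρ σ a' b') := by
    rw [tL, Finsupp.linearCombination_apply, Finsupp.sum, LinearMap.sum_apply]
    refine Finset.sum_congr rfl fun a' _ => ?_
    rw [LinearMap.smul_apply, tX, Finsupp.linearCombination_apply, Finsupp.sum, Finset.smul_sum]
    refine Finset.sum_congr rfl fun b' _ => ?_
    simp only [Finsupp.smul_single, smul_eq_mul, mul_assoc]
  rw [h1, Finsupp.finsetSum_apply]
  simp only [Finsupp.finsetSum_apply]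
  rw [Finset.sum_eq_single a, Finset.sum_eq_single b]
  · simp
  · intro b' hb' hne
    by_cases ha : a ∈ f.support
    · rw [Finsupp.single_eq_of_ne]
      exact fun e => hne (h ha hb' e.symm).2
    · simp [Finsupp.notMem_support_iff.1 ha]
  · intro hb
    simp [Finsupp.notMem_support_iff.1 hb]
  · intro a' ha' hne
    refine Finset.sum_eq_zero fun b' hb' => ?_
    rw [Finsupp.single_eq_of_ne]
    exact fun e => hne (h ha' hb' e.symm).1
  · intro ha
    simp [Finsupp.notMem_support_iff.1 ha]

/-- The torus has no zero divisors. -/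
lemma tL_eq_zero {ρ σ : ℂ} (hρ : ρ ≠ 0) (hσ : σ ≠ 0) {f g : Expo →₀ ℂ}
    (h : tL ρ σ f g = 0) : f = 0 ∨ g = 0 := by
  by_contra! hne
  obtain ⟨a, ha, b, hb, hu⟩ := UniqueSums.uniqueAdd_of_nonempty
    (Finsupp.support_nonempty_iff.2 hne.1) (Finsupp.support_nonempty_iff.2 hne.2)
  have := tL_apply_unique ρ σ f g a b hu
  rw [h, Finsupp.coe_zero, Pi.zero_apply, eq_comm] at this
  exact mul_ne_zero (mul_ne_zero (Finsupp.mem_support_iff.1 ha) (Finsupp.mem_support_iff.1 hb))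
    (cc_ne_zero hρ hσ _ _) this

/-- A one-sided invertible torus element (with nonnegative exponents of `x, y, z`) is a nonzero
multiple of a monomial in `K₁, K₂`: exponents have two unique sums, so both factors of `1` are
monomials. -/
lemma tL_unit {ρ σ : ℂ} (hρ : ρ ≠ 0) (hσ : σ ≠ 0) {f g : Expo →₀ ℂ}
    (h : tL ρ σ f g = Finsupp.single 0 1) :
    ∃ (t : ℂ) (m n : ℤ), t ≠ 0 ∧ f = Finsupp.single (m, n, 0, 0, 0) t := by
  have hf : f ≠ 0 := by
    rintro rfl
    simpa using DFunLike.congr_fun h 0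
  have hg : g ≠ 0 := by
    rintro rfl
    simpa using DFunLike.congr_fun h 0
  have key : ∀ a ∈ f.support, ∀ b ∈ g.support, UniqueAdd f.support g.support a b →
      a + b = 0 := by
    intro a ha b hb hu
    by_contra hab
    have := tL_apply_unique ρ σ f g a b hu
    rw [h, Finsupp.single_eq_of_ne hab, eq_comm] at this
    exact mul_ne_zero (mul_ne_zero (Finsupp.mem_support_iff.1 ha) (Finsupp.mem_support_iff.1 hb))
      (cc_ne_zero hρ hσ _ _) this
  have hcard : ¬ 1 < f.support.card * g.support.card := by
    intro hc
    obtain ⟨p, hp, q, hq, hpq, hup, huq⟩ := TwoUniqueSums.uniqueAdd_of_one_lt_card hc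
    rw [Finset.mem_product] at hp hq
    have e1 := key _ hp.1 _ hp.2 hup
    have e2 := key _ hq.1 _ hq.2 huq
    have := hup hq.1 hq.2 (e2.trans e1.symm)
    exact hpq (Prod.ext this.1.symm this.2.symm)
  have hf1 : 0 < f.support.card := Finset.card_pos.2 (Finsupp.support_nonempty_iff.2 hf)
  have hg1 : 0 < g.support.card := Finset.card_pos.2 (Finsupp.support_nonempty_iff.2 hg)
  have hfc : f.support.card = 1 := by nlinarith
  obtain ⟨a, ha, b, hb, hu⟩ := UniqueSums.uniqueAdd_of_nonempty
    (Finsupp.support_nonempty_iff.2 hf) (Finsupp.support_nonempty_iff.2 hg)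
  have hab := key a ha b hb hu
  obtain ⟨a', t, ht, rfl⟩ := Finsupp.card_support_eq_one'.1 hfc
  obtain rfl : a = a' := by
    by_contra hne
    exact Finsupp.mem_support_iff.1 ha (Finsupp.single_eq_of_ne hne)
  obtain ⟨m, n, j, k, i⟩ := a
  obtain ⟨m', n', j', k', i'⟩ := b
  simp only [Prod.mk_add_mk, Prod.mk_eq_zero] at hab
  obtain ⟨-, -, h1, h2, h3⟩ := hab
  obtain rfl : j = 0 := by omega
  obtain rfl : k = 0 := by omega
  obtain rfl : i = 0 := by omega
  exact ⟨t, m, n, ht, rfl⟩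

/-! ### Relations and weights in the algebra -/

section Algebra

variable {ρ σ : ℂ}

lemma K₁_mul_inv : K₁ ρ σ * K₁inv ρ σ = 1 := by
  simpa [K₁, K₁inv] using RingQuot.mkAlgHom_rel ℂ (VRel.k1inv (ρ := ρ) (σ := σ))

lemma K₁_inv_mul : K₁inv ρ σ * K₁ ρ σ = 1 := by
  simpa [K₁, K₁inv] using RingQuot.mkAlgHom_rel ℂ (VRel.invk1 (ρ := ρ) (σ := σ))

lemma K₂_mul_inv : K₂ ρ σ * K₂inv ρ σ = 1 := by
  simpa [K₂, K₂inv] using RingQuot.mkAlgHom_rel ℂ (VRel.k2inv (ρ := ρ) (σ := σ))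

lemma K₂_inv_mul : K₂inv ρ σ * K₂ ρ σ = 1 := by
  simpa [K₂, K₂inv] using RingQuot.mkAlgHom_rel ℂ (VRel.invk2 (ρ := ρ) (σ := σ))

lemma K₁_mul_K₂ : K₁ ρ σ * K₂ ρ σ = K₂ ρ σ * K₁ ρ σ := by
  simpa [K₁, K₂] using RingQuot.mkAlgHom_rel ℂ (VRel.k1k2 (ρ := ρ) (σ := σ))

lemma K₁_mul_E₁ : K₁ ρ σ * vE₁ ρ σ = (ρ * (σ ^ 2)⁻¹) • (vE₁ ρ σ * K₁ ρ σ) := by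
  simpa only [K₁, vE₁, map_mul, map_smul] using
    RingQuot.mkAlgHom_rel ℂ (VRel.k1e1 (ρ := ρ) (σ := σ))

lemma K₁_mul_E₂ : K₁ ρ σ * vE₂ ρ σ = (ρ * σ) • (vE₂ ρ σ * K₁ ρ σ) := by
  simpa only [K₁, vE₂, map_mul, map_smul] using
    RingQuot.mkAlgHom_rel ℂ (VRel.k1e2 (ρ := ρ) (σ := σ))

lemma K₂_mul_E₁ : K₂ ρ σ * vE₁ ρ σ = (ρ⁻¹ * σ⁻¹) • (vE₁ ρ σ * K₂ ρ σ) := by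
  simpa only [K₂, vE₁, map_mul, map_smul] using
    RingQuot.mkAlgHom_rel ℂ (VRel.k2e1 (ρ := ρ) (σ := σ))

lemma K₂_mul_E₂ : K₂ ρ σ * vE₂ ρ σ = (ρ ^ 2 * σ⁻¹) • (vE₂ ρ σ * K₂ ρ σ) := by
  simpa only [K₂, vE₂, map_mul, map_smul] using
    RingQuot.mkAlgHom_rel ℂ (VRel.k2e2 (ρ := ρ) (σ := σ))

lemma E₁_mul_E₂ : vE₁ ρ σ * vE₂ ρ σ = σ ^ 3 • (vE₂ ρ σ * vE₁ ρ σ) + vE₃ ρ σ := by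
  rw [vE₃]; abel

/-- The first Serre relation in terms of `E₃`. -/
lemma E₁_mul_E₃ : vE₁ ρ σ * vE₃ ρ σ = ρ ^ 3 • (vE₃ ρ σ * vE₁ ρ σ) := by
  have h := RingQuot.mkAlgHom_rel ℂ (VRel.serre1 (ρ := ρ) (σ := σ))
  simp only [map_mul, map_smul, map_add, map_sub, map_zero] at h
  change vE₁ ρ σ * vE₁ ρ σ * vE₂ ρ σ - (ρ ^ 3 + σ ^ 3) • (vE₁ ρ σ * vE₂ ρ σ * vE₁ ρ σ)
    + (ρ ^ 3 * σ ^ 3) • (vE₂ ρ σ * vE₁ ρ σ * vE₁ ρ σ) = 0 at h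
  rw [← sub_eq_zero, ← h, vE₃]
  simp only [mul_sub, sub_mul, mul_smul_comm, smul_mul_assoc, ← mul_assoc]
  module

/-- The second Serre relation in terms of `E₃`. -/
lemma E₃_mul_E₂ : vE₃ ρ σ * vE₂ ρ σ = ρ ^ 3 • (vE₂ ρ σ * vE₃ ρ σ) := by
  have h := RingQuot.mkAlgHom_rel ℂ (VRel.serre2 (ρ := ρ) (σ := σ))
  simp only [map_mul, map_smul, map_add, map_sub, map_zero] at h
  change vE₁ ρ σ * vE₂ ρ σ * vE₂ ρ σ - (ρ ^ 3 + σ ^ 3) • (vE₂ ρ σ * vE₁ ρ σ * vE₂ ρ σ)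
    + (ρ ^ 3 * σ ^ 3) • (vE₂ ρ σ * vE₂ ρ σ * vE₁ ρ σ) = 0 at h
  rw [← sub_eq_zero, ← h, vE₃]
  simp only [mul_sub, sub_mul, mul_smul_comm, smul_mul_assoc, ← mul_assoc]
  module

variable (ρ σ) in
/-- `K₁` as a unit. -/
def uK₁ : (Vsl3 ρ σ)ˣ := ⟨K₁ ρ σ, K₁inv ρ σ, K₁_mul_inv, K₁_inv_mul⟩

variable (ρ σ) in
/-- `K₂` as a unit. -/
def uK₂ : (Vsl3 ρ σ)ˣ := ⟨K₂ ρ σ, K₂inv ρ σ, K₂_mul_inv, K₂_inv_mul⟩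

lemma commute_uK : Commute (uK₁ ρ σ) (uK₂ ρ σ) := Units.ext K₁_mul_K₂

variable (ρ σ) in
/-- The group-like monomial `K₁ᵐ K₂ⁿ`. -/
def uK (m n : ℤ) : (Vsl3 ρ σ)ˣ := uK₁ ρ σ ^ m * uK₂ ρ σ ^ n

lemma uK_mul (m n m' n' : ℤ) : uK ρ σ m n * uK ρ σ m' n' = uK ρ σ (m + m') (n + n') := by
  have h : Commute (uK₂ ρ σ ^ n) (uK₁ ρ σ ^ m') := (commute_uK.zpow_zpow m' n).symm
  simp only [uK, zpow_add]
  rw [mul_assoc, ← mul_assoc (uK₂ ρ σ ^ n), h.eq]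
  simp only [mul_assoc]

lemma K₁z_eq (m : ℤ) : K₁z ρ σ m = ((uK₁ ρ σ ^ m : (Vsl3 ρ σ)ˣ) : Vsl3 ρ σ) := by
  unfold K₁z
  split_ifs with h
  · lift m to ℕ using h
    simp [uK₁]
  · obtain ⟨k, rfl⟩ : ∃ k : ℕ, m = -k := ⟨m.natAbs, by omega⟩
    rw [zpow_neg, ← inv_zpow]
    simp [uK₁]

lemma K₂z_eq (m : ℤ) : K₂z ρ σ m = ((uK₂ ρ σ ^ m : (Vsl3 ρ σ)ˣ) : Vsl3 ρ σ) := by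
  unfold K₂z
  split_ifs with h
  · lift m to ℕ using h
    simp [uK₂]
  · obtain ⟨k, rfl⟩ : ∃ k : ℕ, m = -k := ⟨m.natAbs, by omega⟩
    rw [zpow_neg, ← inv_zpow]
    simp [uK₂]

lemma uK_one_zero : (uK ρ σ 1 0 : Vsl3 ρ σ) = K₁ ρ σ := by simp [uK, uK₁]

lemma uK_zero_one : (uK ρ σ 0 1 : Vsl3 ρ σ) = K₂ ρ σ := by simp [uK, uK₂]

lemma zpow_skew_commute {A : Type*} [Ring A] [Algebra ℂ A] (u : Aˣ) (e : A) {q : ℂ} (hq : q ≠ 0)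
    (h : (u : A) * e = q • (e * (u : A))) (m : ℤ) :
    ((u ^ m : Aˣ) : A) * e = q ^ m • (e * ((u ^ m : Aˣ) : A)) := by
  have h' : ((u⁻¹ : Aˣ) : A) * e = q⁻¹ • (e * ((u⁻¹ : Aˣ) : A)) := by
    rw [Units.inv_mul_eq_iff_eq_mul, mul_smul_comm, ← mul_assoc, h, smul_mul_assoc, smul_smul,
      inv_mul_cancel₀ hq, one_smul, mul_assoc, Units.mul_inv, mul_one]
  induction m using Int.induction_on with
  | zero => simp
  | succ i ih =>
    rw [zpow_add_one, zpow_add_one₀ hq, Units.val_mul, mul_assoc, h, mul_smul_comm, ← mul_assoc,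
      ih, smul_mul_assoc, smul_smul, mul_comm q, mul_assoc]
  | pred i ih =>
    rw [zpow_sub_one, zpow_sub_one₀ hq, Units.val_mul, mul_assoc, h', mul_smul_comm, ← mul_assoc,
      ih, smul_mul_assoc, smul_smul, mul_comm q⁻¹, mul_assoc]

/-- The scalar by which conjugation with `K₁ᵐ K₂ⁿ` acts on elements of degree `(d₁, d₂)` in
`E₁, E₂`. -/
def wt (ρ σ : ℂ) (m n d₁ d₂ : ℤ) : ℂ :=
  ρ ^ (d₁ * (m - n) + d₂ * (m + 2 * n)) * σ ^ (d₁ * (-2 * m - n) + d₂ * (m - n))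

lemma wt_ne_zero (hρ : ρ ≠ 0) (hσ : σ ≠ 0) (m n d₁ d₂ : ℤ) : wt ρ σ m n d₁ d₂ ≠ 0 :=
  mul_ne_zero (zpow_ne_zero _ hρ) (zpow_ne_zero _ hσ)

lemma wt_add (hρ : ρ ≠ 0) (hσ : σ ≠ 0) (m n d₁ d₂ e₁ e₂ : ℤ) :
    wt ρ σ m n (d₁ + e₁) (d₂ + e₂) = wt ρ σ m n d₁ d₂ * wt ρ σ m n e₁ e₂ := by
  have h1 : (d₁ + e₁) * (m - n) + (d₂ + e₂) * (m + 2 * n)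
    = (d₁ * (m - n) + d₂ * (m + 2 * n)) + (e₁ * (m - n) + e₂ * (m + 2 * n)) := by ring
  have h2 : (d₁ + e₁) * (-2 * m - n) + (d₂ + e₂) * (m - n)
    = (d₁ * (-2 * m - n) + d₂ * (m - n)) + (e₁ * (-2 * m - n) + e₂ * (m - n)) := by ring
  simp only [wt, h1, h2, zpow_add₀ hρ, zpow_add₀ hσ]; ring

/-- `x` is a simultaneous eigenvector of conjugation by the `K`'s, of the weight that elements of
degree `(d₁, d₂)` in `E₁, E₂` have. -/
def HasWt (x : Vsl3 ρ σ) (d₁ d₂ : ℤ) : Prop :=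
  ∀ m n : ℤ, (uK ρ σ m n : Vsl3 ρ σ) * x = wt ρ σ m n d₁ d₂ • (x * (uK ρ σ m n : Vsl3 ρ σ))

lemma HasWt.mul (hρ : ρ ≠ 0) (hσ : σ ≠ 0) {x y : Vsl3 ρ σ} {d₁ d₂ e₁ e₂ : ℤ}
    (hx : HasWt x d₁ d₂) (hy : HasWt y e₁ e₂) : HasWt (x * y) (d₁ + e₁) (d₂ + e₂) := by
  intro m n
  rw [← mul_assoc, hx, smul_mul_assoc, mul_assoc, hy, mul_smul_comm, smul_smul, mul_assoc,
    wt_add hρ hσ]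

lemma HasWt.pow (hρ : ρ ≠ 0) (hσ : σ ≠ 0) {x : Vsl3 ρ σ} {d₁ d₂ : ℤ}
    (hx : HasWt x d₁ d₂) (k : ℕ) : HasWt (x ^ k) (k * d₁) (k * d₂) := by
  induction k with
  | zero => intro m n; simp [wt]
  | succ k ih =>
    rw [pow_succ]
    convert ih.mul hρ hσ hx using 1 <;> push_cast <;> ring

lemma hasWt_of {x : Vsl3 ρ σ} {q₁ q₂ : ℂ} (hq₁ : q₁ ≠ 0) (hq₂ : q₂ ≠ 0)
    (h₁ : K₁ ρ σ * x = q₁ • (x * K₁ ρ σ)) (h₂ : K₂ ρ σ * x = q₂ • (x * K₂ ρ σ)) (m n : ℤ) :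
    (uK ρ σ m n : Vsl3 ρ σ) * x = (q₁ ^ m * q₂ ^ n) • (x * (uK ρ σ m n : Vsl3 ρ σ)) := by
  rw [uK, Units.val_mul, mul_assoc, zpow_skew_commute (uK₂ ρ σ) x hq₂ h₂, mul_smul_comm,
    ← mul_assoc, zpow_skew_commute (uK₁ ρ σ) x hq₁ h₁, smul_mul_assoc, smul_smul, mul_assoc,
    mul_comm (q₂ ^ n)]

lemma hasWt_E₁ (hρ : ρ ≠ 0) (hσ : σ ≠ 0) : HasWt (vE₁ ρ σ) 1 0 := by
  intro m n
  rw [hasWt_of (by positivity) (by positivity) K₁_mul_E₁ K₂_mul_E₁]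
  congr 1
  simp only [wt, one_mul, zero_mul, add_zero]
  rw [zpow_sub₀ hρ, zpow_sub₀ hσ, zpow_mul, mul_zpow, mul_zpow]
  simp only [zpow_neg, inv_zpow]
  norm_cast
  field_simp

lemma hasWt_E₂ (hρ : ρ ≠ 0) (hσ : σ ≠ 0) : HasWt (vE₂ ρ σ) 0 1 := by
  intro m n
  rw [hasWt_of (by positivity) (by positivity) K₁_mul_E₂ K₂_mul_E₂]
  congr 1
  simp only [wt, one_mul, zero_mul, zero_add]
  rw [zpow_add₀ hρ, zpow_sub₀ hσ, zpow_mul, mul_zpow, mul_zpow]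
  simp only [inv_zpow]
  norm_cast
  field_simp

lemma hasWt_E₃ (hρ : ρ ≠ 0) (hσ : σ ≠ 0) : HasWt (vE₃ ρ σ) 1 1 := by
  intro m n
  have h1 := (hasWt_E₁ hρ hσ).mul hρ hσ (hasWt_E₂ hρ hσ) m n
  have h2 := (hasWt_E₂ hρ hσ).mul hρ hσ (hasWt_E₁ hρ hσ) m n
  simp only [zero_add, add_zero] at h1 h2
  rw [vE₃, mul_sub, mul_smul_comm, h1, h2, sub_mul, smul_sub, smul_mul_assoc, smul_comm]

/-! ### PBW monomials span -/

variable (ρ σ) in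
/-- The PBW monomial `K₁ᵐ K₂ⁿ E₂ʲ E₃ᵏ E₁ⁱ`. -/
def pbw (g : Expo) : Vsl3 ρ σ :=
  (uK ρ σ g.1 g.2.1 : Vsl3 ρ σ) * (vE₂ ρ σ ^ g.2.2.1 * vE₃ ρ σ ^ g.2.2.2.1 * vE₁ ρ σ ^ g.2.2.2.2)

/-- First component of the degree of a PBW monomial. -/
def dg₁ (g : Expo) : ℤ := g.2.2.2.1 + g.2.2.2.2

/-- Second component of the degree of a PBW monomial. -/
def dg₂ (g : Expo) : ℤ := g.2.2.1 + g.2.2.2.1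

lemma hasWt_pbw (hρ : ρ ≠ 0) (hσ : σ ≠ 0) (g : Expo) : HasWt (pbw ρ σ g) (dg₁ g) (dg₂ g) := by
  have h0 : HasWt (uK ρ σ g.1 g.2.1 : Vsl3 ρ σ) 0 0 := by
    intro m n
    rw [← Units.val_mul, ← Units.val_mul, uK_mul, uK_mul]
    simp [wt, add_comm]
  have := h0.mul hρ hσ ((((hasWt_E₂ hρ hσ).pow hρ hσ g.2.2.1).mul hρ hσ
    ((hasWt_E₃ hρ hσ).pow hρ hσ g.2.2.2.1)).mul hρ hσ ((hasWt_E₁ hρ hσ).pow hρ hσ g.2.2.2.2))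
  simpa [pbw, dg₁, dg₂] using this

variable (ρ σ) in
/-- The linear map sending each exponent to its PBW monomial. -/
def pbwMap : (Expo →₀ ℂ) →ₗ[ℂ] Vsl3 ρ σ := Finsupp.linearCombination ℂ (pbw ρ σ)

lemma pbwMap_single (g : Expo) (t : ℂ) :
    pbwMap ρ σ (Finsupp.single g t) = t • pbw ρ σ g := by
  simp [pbwMap, Finsupp.linearCombination_single]

lemma pbw_mem (g : Expo) : pbw ρ σ g ∈ LinearMap.range (pbwMap ρ σ) :=
  ⟨Finsupp.single g 1, by rw [pbwMap_single, one_smul]⟩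

lemma E₃_mul_E₂_pow (j : ℕ) :
    vE₃ ρ σ * vE₂ ρ σ ^ j = (ρ ^ 3) ^ j • (vE₂ ρ σ ^ j * vE₃ ρ σ) := by
  induction j with
  | zero => simp
  | succ j ih =>
    rw [pow_succ, ← mul_assoc, ih, smul_mul_assoc, mul_assoc, E₃_mul_E₂, mul_smul_comm, smul_smul,
      ← mul_assoc, ← pow_succ]

lemma E₁_mul_E₃_pow (k : ℕ) :
    vE₁ ρ σ * vE₃ ρ σ ^ k = (ρ ^ 3) ^ k • (vE₃ ρ σ ^ k * vE₁ ρ σ) := by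
  induction k with
  | zero => simp
  | succ j ih =>
    rw [pow_succ, ← mul_assoc, ih, smul_mul_assoc, mul_assoc, E₁_mul_E₃, mul_smul_comm, smul_smul,
      ← mul_assoc, ← pow_succ]

lemma E₁_mul_E₂_pow (j : ℕ) : ∃ t : ℂ, vE₁ ρ σ * vE₂ ρ σ ^ (j + 1)
    = (σ ^ 3) ^ (j + 1) • (vE₂ ρ σ ^ (j + 1) * vE₁ ρ σ) + t • (vE₂ ρ σ ^ j * vE₃ ρ σ) := by
  induction j with
  | zero => exact ⟨1, by simpa using E₁_mul_E₂⟩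
  | succ j ih =>
    obtain ⟨t, ht⟩ := ih
    refine ⟨(σ ^ 3) ^ (j + 1) + t * ρ ^ 3, ?_⟩
    rw [pow_succ (vE₂ ρ σ) (j + 1), ← mul_assoc, ht, add_mul, smul_mul_assoc, smul_mul_assoc,
      mul_assoc, mul_assoc, E₁_mul_E₂, E₃_mul_E₂, mul_add, mul_smul_comm, mul_smul_comm,
      ← mul_assoc, ← mul_assoc, ← pow_succ, ← pow_succ]
    module

/-- Moving a group-like monomial to the left past `x` costs a scalar only. -/
lemma HasWt.symm (hρ : ρ ≠ 0) (hσ : σ ≠ 0) {x : Vsl3 ρ σ} {d₁ d₂ : ℤ} (hx : HasWt x d₁ d₂)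
    (m n : ℤ) :
    x * (uK ρ σ m n : Vsl3 ρ σ) = (wt ρ σ m n d₁ d₂)⁻¹ • ((uK ρ σ m n : Vsl3 ρ σ) * x) := by
  rw [hx, smul_smul, inv_mul_cancel₀ (wt_ne_zero hρ hσ _ _ _ _), one_smul]

lemma uK_mul_pbw (m n : ℤ) (g : Expo) :
    (uK ρ σ m n : Vsl3 ρ σ) * pbw ρ σ g = pbw ρ σ ((m, n, 0, 0, 0) + g) := by
  obtain ⟨m', n', j, k, i⟩ := g
  simp only [pbw, Prod.mk_add_mk, zero_add, ← uK_mul, Units.val_mul, mul_assoc]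

lemma E₂_mul_pbw (hρ : ρ ≠ 0) (hσ : σ ≠ 0) (g : Expo) :
    vE₂ ρ σ * pbw ρ σ g ∈ LinearMap.range (pbwMap ρ σ) := by
  obtain ⟨m, n, j, k, i⟩ := g
  have : vE₂ ρ σ * pbw ρ σ (m, n, j, k, i)
      = (wt ρ σ m n 0 1)⁻¹ • pbw ρ σ (m, n, j + 1, k, i) := by
    simp only [pbw, ← mul_assoc]
    rw [(hasWt_E₂ hρ hσ).symm hρ hσ, pow_succ']
    simp only [smul_mul_assoc, mul_assoc]
  rw [this]
  exact Submodule.smul_mem _ _ (pbw_mem _)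

lemma E₁_mul_pbw (hρ : ρ ≠ 0) (hσ : σ ≠ 0) (g : Expo) :
    vE₁ ρ σ * pbw ρ σ g ∈ LinearMap.range (pbwMap ρ σ) := by
  obtain ⟨m, n, j, k, i⟩ := g
  have h1 : vE₁ ρ σ * pbw ρ σ (m, n, j, k, i)
      = (wt ρ σ m n 1 0)⁻¹ • ((uK ρ σ m n : Vsl3 ρ σ) * (vE₁ ρ σ * vE₂ ρ σ ^ j
        * vE₃ ρ σ ^ k * vE₁ ρ σ ^ i)) := by
    simp only [pbw, ← mul_assoc]
    rw [(hasWt_E₁ hρ hσ).symm hρ hσ]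
    simp only [smul_mul_assoc]
  rw [h1]
  refine Submodule.smul_mem _ _ ?_
  rcases j with _ | j
  · have : (uK ρ σ m n : Vsl3 ρ σ) * (vE₁ ρ σ * vE₂ ρ σ ^ 0 * vE₃ ρ σ ^ k * vE₁ ρ σ ^ i)
        = (ρ ^ 3) ^ k • pbw ρ σ (m, n, 0, k, i + 1) := by
      simp only [pbw, pow_zero, mul_one, one_mul, E₁_mul_E₃_pow, smul_mul_assoc, mul_smul_comm,
        pow_succ' (vE₁ ρ σ), mul_assoc]
    rw [this]
    exact Submodule.smul_mem _ _ (pbw_mem _)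
  · obtain ⟨t, ht⟩ := E₁_mul_E₂_pow (ρ := ρ) (σ := σ) j
    have : (uK ρ σ m n : Vsl3 ρ σ) * (vE₁ ρ σ * vE₂ ρ σ ^ (j + 1) * vE₃ ρ σ ^ k * vE₁ ρ σ ^ i)
        = ((σ ^ 3) ^ (j + 1) * (ρ ^ 3) ^ k) • pbw ρ σ (m, n, j + 1, k, i + 1)
          + t • pbw ρ σ (m, n, j, k + 1, i) := by
      rw [ht, add_mul, smul_mul_assoc, mul_assoc _ (vE₁ ρ σ), E₁_mul_E₃_pow]
      simp only [pbw, add_mul, mul_add, smul_mul_assoc, mul_smul_comm, smul_smul,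
        pow_succ' (vE₁ ρ σ), pow_succ' (vE₃ ρ σ), mul_assoc]
    rw [this]
    exact Submodule.add_mem _ (Submodule.smul_mem _ _ (pbw_mem _))
      (Submodule.smul_mem _ _ (pbw_mem _))

/-- PBW monomials span: their span contains `1` and is stable under left multiplication by the
generators. -/
lemma pbwMap_surjective (hρ : ρ ≠ 0) (hσ : σ ≠ 0) : Function.Surjective (pbwMap ρ σ) := by
  have lift : ∀ v : Vsl3 ρ σ, (∀ g, v * pbw ρ σ g ∈ LinearMap.range (pbwMap ρ σ)) →
      ∀ w ∈ LinearMap.range (pbwMap ρ σ), v * w ∈ LinearMap.range (pbwMap ρ σ) := by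
    rintro v hv _ ⟨f, rfl⟩
    induction f using Finsupp.induction_linear with
    | zero => simp
    | add f₁ f₂ h₁ h₂ => rw [map_add, mul_add]; exact Submodule.add_mem _ h₁ h₂
    | single g t =>
      rw [pbwMap_single, mul_smul_comm]
      exact Submodule.smul_mem _ _ (hv g)
  have stable : ∀ v w : Vsl3 ρ σ, w ∈ LinearMap.range (pbwMap ρ σ) →
      v * w ∈ LinearMap.range (pbwMap ρ σ) := by
    intro v
    obtain ⟨v, rfl⟩ := RingQuot.mkAlgHom_surjective ℂ (VRel ρ σ) v
    induction v using FreeAlgebra.induction with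
    | grade0 c =>
      intro w hw
      rw [AlgHom.commutes, ← Algebra.smul_def]
      exact Submodule.smul_mem _ _ hw
    | grade1 x =>
      refine lift _ fun g => ?_
      have hK : ∀ m n : ℤ, (uK ρ σ m n : Vsl3 ρ σ) * pbw ρ σ g ∈ LinearMap.range (pbwMap ρ σ) :=
        fun m n => uK_mul_pbw (ρ := ρ) (σ := σ) m n g ▸ pbw_mem _
      fin_cases x
      · exact E₁_mul_pbw hρ hσ g
      · exact E₂_mul_pbw hρ hσ g
      · simpa [uK, uK₁, K₁] using hK 1 0
      · simpa [uK, uK₁, K₁inv] using hK (-1) 0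
      · simpa [uK, uK₂, K₂] using hK 0 1
      · simpa [uK, uK₂, K₂inv] using hK 0 (-1)
    | mul a b ha hb =>
      intro w hw
      rw [map_mul, mul_assoc]
      exact ha _ (hb _ hw)
    | add a b ha hb =>
      intro w hw
      rw [map_add, add_mul]
      exact Submodule.add_mem _ (ha _ hw) (hb _ hw)
  intro v
  have h1 : (1 : Vsl3 ρ σ) ∈ LinearMap.range (pbwMap ρ σ) := by
    have := pbw_mem (ρ := ρ) (σ := σ) (0, 0, 0, 0, 0)
    simpa [pbw, uK] using this
  simpa using stable v 1 h1

/-! ### The homomorphism to the quantum torus -/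

/-- The images of the six generators in the quantum torus: `E₁ ↦ x + z`, `E₂ ↦ y` and
`Kᵢ ↦ Kᵢ`. -/
def torusGen (ρ σ : ℂ) : Fin 6 → Module.End ℂ (Expo →₀ ℂ) :=
  ![tX ρ σ (0, 0, 0, 1, 0) + tX ρ σ (0, 0, 0, 0, 1), tX ρ σ (0, 0, 1, 0, 0),
    tX ρ σ (1, 0, 0, 0, 0), tX ρ σ (-1, 0, 0, 0, 0),
    tX ρ σ (0, 1, 0, 0, 0), tX ρ σ (0, -1, 0, 0, 0)]

lemma torusGen_rel (hρ : ρ ≠ 0) (hσ : σ ≠ 0) ⦃x y : FreeAlgebra ℂ (Fin 6)⦄ (h : VRel ρ σ x y) :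
    FreeAlgebra.lift ℂ (torusGen ρ σ) x = FreeAlgebra.lift ℂ (torusGen ρ σ) y := by
  have h0 : tX ρ σ (0, 0, 0, 0, 0) = 1 := tX_zero ρ σ
  cases h
  all_goals
    simp only [map_mul, map_smul, map_add, map_sub, map_one, map_zero, FreeAlgebra.lift_ι_apply]
    simp [torusGen, add_mul, mul_add, tX_mul hρ hσ, smul_smul, cc, qr, qs, h0, zpow_neg]
  all_goals
    match_scalars <;> field_simp <;> ring

/-- The representation of the algebra on the quantum torus by left multiplication. -/
def torusRep (hρ : ρ ≠ 0) (hσ : σ ≠ 0) : Vsl3 ρ σ →ₐ[ℂ] Module.End ℂ (Expo →₀ ℂ) :=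
  RingQuot.liftAlgHom ℂ ⟨FreeAlgebra.lift ℂ (torusGen ρ σ), torusGen_rel hρ hσ⟩

lemma torusRep_mk (hρ : ρ ≠ 0) (hσ : σ ≠ 0) (i : Fin 6) :
    torusRep hρ hσ (RingQuot.mkAlgHom ℂ (VRel ρ σ) (ι ℂ i)) = torusGen ρ σ i := by
  rw [torusRep, RingQuot.liftAlgHom_mkAlgHom_apply, FreeAlgebra.lift_ι_apply]

/-- The algebra homomorphism to the quantum torus, with values read off as coefficient
functions. -/
def ev (hρ : ρ ≠ 0) (hσ : σ ≠ 0) : Vsl3 ρ σ →ₗ[ℂ] (Expo →₀ ℂ) :=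
  (LinearMap.applyₗ (Finsupp.single 0 1)).comp (torusRep hρ hσ).toLinearMap

lemma ev_apply (hρ : ρ ≠ 0) (hσ : σ ≠ 0) (v : Vsl3 ρ σ) :
    ev hρ hσ v = torusRep hρ hσ v (Finsupp.single 0 1) := rfl

lemma tL_apply_one (f : Expo →₀ ℂ) : tL ρ σ f (Finsupp.single 0 1) = f := by
  induction f using Finsupp.induction_linear with
  | zero => simp
  | add f g hf hg => rw [map_add, LinearMap.add_apply, hf, hg]
  | single a t => simp [tL_single, tX_single, cc, qr, qs]

/-- The representation is by left multiplication with the image in the torus. -/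
lemma torusRep_eq (hρ : ρ ≠ 0) (hσ : σ ≠ 0) (v : Vsl3 ρ σ) :
    torusRep hρ hσ v = tL ρ σ (ev hρ hσ v) := by
  suffices h : ∃ f, torusRep hρ hσ v = tL ρ σ f by
    obtain ⟨f, hf⟩ := h
    rw [ev_apply, hf, tL_apply_one]
  obtain ⟨v, rfl⟩ := RingQuot.mkAlgHom_surjective ℂ (VRel ρ σ) v
  induction v using FreeAlgebra.induction with
  | grade0 c =>
    refine ⟨Finsupp.single 0 c, ?_⟩
    rw [AlgHom.commutes, AlgHom.commutes, tL_single, tX_zero, Algebra.algebraMap_eq_smul_one]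
  | grade1 x =>
    rw [torusRep_mk]
    have hX : ∀ a, ∃ f, tX ρ σ a = tL ρ σ f := fun a =>
      ⟨Finsupp.single a 1, by rw [tL_single, one_smul]⟩
    fin_cases x
    · refine ⟨Finsupp.single (0, 0, 0, 1, 0) 1 + Finsupp.single (0, 0, 0, 0, 1) 1, ?_⟩
      rw [map_add, tL_single, tL_single, one_smul, one_smul]
      rfl
    all_goals exact hX _
  | mul a b ha hb =>
    obtain ⟨f, hf⟩ := ha
    obtain ⟨g, hg⟩ := hb
    exact ⟨tL ρ σ f g, by rw [map_mul, map_mul, hf, hg, tL_mul hρ hσ]⟩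
  | add a b ha hb =>
    obtain ⟨f, hf⟩ := ha
    obtain ⟨g, hg⟩ := hb
    exact ⟨f + g, by rw [map_add, map_add, hf, hg, map_add]⟩

lemma ev_mul (hρ : ρ ≠ 0) (hσ : σ ≠ 0) (v w : Vsl3 ρ σ) :
    ev hρ hσ (v * w) = tL ρ σ (ev hρ hσ v) (ev hρ hσ w) := by
  rw [← torusRep_eq, ev_apply, ev_apply, map_mul, Module.End.mul_apply]

lemma ev_one (hρ : ρ ≠ 0) (hσ : σ ≠ 0) : ev hρ hσ (1 : Vsl3 ρ σ) = Finsupp.single 0 1 := by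
  rw [ev_apply, map_one, Module.End.one_apply]

lemma zpow_torus (hρ : ρ ≠ 0) (hσ : σ ≠ 0) (u : (Vsl3 ρ σ)ˣ) (p q : ℤ)
    (h : torusRep hρ hσ u = tX ρ σ (p, q, 0, 0, 0))
    (h' : torusRep hρ hσ (u⁻¹ : (Vsl3 ρ σ)ˣ) = tX ρ σ (-p, -q, 0, 0, 0)) (m : ℤ) :
    torusRep hρ hσ ((u ^ m : (Vsl3 ρ σ)ˣ) : Vsl3 ρ σ) = tX ρ σ (m * p, m * q, 0, 0, 0) := by
  induction m using Int.induction_on with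
  | zero =>
    have h0 : tX ρ σ (0, 0, 0, 0, 0) = 1 := tX_zero ρ σ
    simp [h0]
  | succ i ih =>
    rw [zpow_add_one, Units.val_mul, map_mul, ih, h, tX_mul hρ hσ]
    simp [cc, qr, qs, add_mul]
  | pred i ih =>
    rw [zpow_sub_one, Units.val_mul, map_mul, ih, h', tX_mul hρ hσ]
    simp [cc, qr, qs, add_mul, sub_eq_add_neg]

lemma torusRep_uK (hρ : ρ ≠ 0) (hσ : σ ≠ 0) (m n : ℤ) :
    torusRep hρ hσ (uK ρ σ m n : Vsl3 ρ σ) = tX ρ σ (m, n, 0, 0, 0) := by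
  rw [uK, Units.val_mul, map_mul,
    zpow_torus hρ hσ (uK₁ ρ σ) 1 0 (torusRep_mk hρ hσ 2) (torusRep_mk hρ hσ 3),
    zpow_torus hρ hσ (uK₂ ρ σ) 0 1 (torusRep_mk hρ hσ 4) (torusRep_mk hρ hσ 5), tX_mul hρ hσ]
  simp [cc, qr, qs]

/-! ### Independence of the PBW monomials -/

/-- `f` has the monomial `a`, and all its other monomials have a smaller exponent of `z`. -/
def Lead (a : Expo) (f : Expo →₀ ℂ) : Prop :=
  ∃ t : ℂ, t ≠ 0 ∧ ∃ R ∈ Finsupp.supported ℂ ℂ {b : Expo | b.2.2.2.2 < a.2.2.2.2},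
    f = Finsupp.single a t + R

lemma tX_mem_supported (c : Expo) {i i' : ℕ} (hi : c.2.2.2.2 + i ≤ i') {R : Expo →₀ ℂ}
    (hR : R ∈ Finsupp.supported ℂ ℂ {b : Expo | b.2.2.2.2 < i}) :
    tX ρ σ c R ∈ Finsupp.supported ℂ ℂ {b : Expo | b.2.2.2.2 < i'} := by
  have : Finsupp.supported ℂ ℂ {b : Expo | b.2.2.2.2 < i}
      ≤ (Finsupp.supported ℂ ℂ {b : Expo | b.2.2.2.2 < i'}).comap (tX ρ σ c) := by
    rw [Finsupp.supported_eq_span_single, Submodule.span_le]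
    rintro _ ⟨b, hb, rfl⟩
    change tX ρ σ c (Finsupp.single b 1) ∈ Finsupp.supported ℂ ℂ _
    rw [tX_single]
    refine Finsupp.single_mem_supported _ _ ?_
    simp only [Set.mem_ofPred_eq, Prod.snd_add] at hb ⊢
    omega
  exact this hR

lemma Lead.tX (hρ : ρ ≠ 0) (hσ : σ ≠ 0) {a : Expo} {f : Expo →₀ ℂ} (h : Lead a f) (c : Expo) :
    Lead (c + a) (tX ρ σ c f) := by
  obtain ⟨t, ht, R, hR, rfl⟩ := h
  refine ⟨_, mul_ne_zero ht (cc_ne_zero hρ hσ c a), _, tX_mem_supported (ρ := ρ) (σ := σ) c ?_ hR,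
    by rw [map_add, tX_single]⟩
  simp

lemma Lead.smul {a : Expo} {f : Expo →₀ ℂ} (h : Lead a f) {u : ℂ} (hu : u ≠ 0) :
    Lead a (u • f) := by
  obtain ⟨t, ht, R, hR, rfl⟩ := h
  exact ⟨u * t, mul_ne_zero hu ht, u • R, Submodule.smul_mem _ _ hR, by
    rw [smul_add, Finsupp.smul_single, smul_eq_mul]⟩

lemma torusRep_E₃ (hρ : ρ ≠ 0) (hσ : σ ≠ 0) :
    torusRep hρ hσ (vE₃ ρ σ) = (ρ ^ 3 - σ ^ 3) • tX ρ σ (0, 0, 1, 1, 0) := by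
  rw [vE₃, map_sub, map_smul, map_mul, map_mul, vE₁, vE₂, torusRep_mk, torusRep_mk]
  simp [torusGen, add_mul, mul_add, tX_mul hρ hσ, cc, qr, qs]
  match_scalars <;> norm_cast <;> ring

lemma lead_E₁_pow (hρ : ρ ≠ 0) (hσ : σ ≠ 0) (i : ℕ) :
    Lead (0, 0, 0, 0, i) ((torusRep hρ hσ (vE₁ ρ σ) ^ i) (Finsupp.single 0 1)) := by
  induction i with
  | zero => exact ⟨1, one_ne_zero, 0, Submodule.zero_mem _, by simp; rfl⟩
  | succ i ih =>
    have h1 : torusRep hρ hσ (vE₁ ρ σ)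
        = tX ρ σ (0, 0, 0, 1, 0) + tX ρ σ (0, 0, 0, 0, 1) := torusRep_mk hρ hσ 0
    rw [pow_succ', Module.End.mul_apply]
    generalize ((torusRep hρ hσ (vE₁ ρ σ) ^ i) (Finsupp.single 0 1)) = f at ih
    rw [h1, LinearMap.add_apply]
    obtain ⟨t, ht, R, hR, hz⟩ := ih.tX hρ hσ (0, 0, 0, 0, 1)
    simp only [Prod.mk_add_mk, add_zero, add_comm 1 i] at hR hz
    refine ⟨t, ht, _, Submodule.add_mem _ hR ?_, by rw [hz, add_comm, add_assoc]⟩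
    -- left multiplication by `x` does not raise the exponent of `z`
    refine tX_mem_supported (i := i + 1) _ (by simp) ?_
    obtain ⟨t', -, R', hR', rfl⟩ := ih
    refine Submodule.add_mem _ (Finsupp.single_mem_supported _ _ (by simp)) ?_
    exact Finsupp.supported_mono (fun b hb => Nat.lt_succ_of_lt hb) hR'

lemma lead_pbw (hρ : ρ ≠ 0) (hσ : σ ≠ 0) (hrs : ρ ^ 3 - σ ^ 3 ≠ 0) (g : Expo) :
    Lead (g.1, g.2.1, g.2.2.1 + g.2.2.2.1, g.2.2.2.1, g.2.2.2.2) (ev hρ hσ (pbw ρ σ g)) := by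
  obtain ⟨m, n, j, k, i⟩ := g
  simp only [ev_apply, pbw, map_mul, map_pow, Module.End.mul_apply]
  have h3 : ∀ k : ℕ, Lead (0, 0, k, k, i) ((torusRep hρ hσ (vE₃ ρ σ) ^ k)
      ((torusRep hρ hσ (vE₁ ρ σ) ^ i) (Finsupp.single 0 1))) := by
    intro k
    induction k with
    | zero => exact lead_E₁_pow hρ hσ i
    | succ k ih =>
      rw [pow_succ', Module.End.mul_apply]
      nth_rewrite 1 [torusRep_E₃]
      rw [LinearMap.smul_apply]
      simpa [add_comm] using (ih.tX hρ hσ (0, 0, 1, 1, 0)).smul hrs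
  have h2 : ∀ j : ℕ, Lead (0, 0, j + k, k, i) ((torusRep hρ hσ (vE₂ ρ σ) ^ j)
      ((torusRep hρ hσ (vE₃ ρ σ) ^ k)
      ((torusRep hρ hσ (vE₁ ρ σ) ^ i) (Finsupp.single 0 1)))) := by
    intro j
    induction j with
    | zero => simpa using h3 k
    | succ j ih =>
      have hE : torusRep hρ hσ (vE₂ ρ σ) = tX ρ σ (0, 0, 1, 0, 0) := torusRep_mk hρ hσ 1
      rw [pow_succ', Module.End.mul_apply]
      nth_rewrite 1 [hE]
      have := ih.tX hρ hσ (0, 0, 1, 0, 0)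
      simpa [add_comm, add_left_comm, add_assoc] using this
  rw [torusRep_uK]
  simpa using (h2 j).tX hρ hσ (m, n, 0, 0, 0)

/-- The images of PBW monomials in the torus are linearly independent, by triangularity in the
exponent of `z`. -/
lemma ev_pbwMap_injective (hρ : ρ ≠ 0) (hσ : σ ≠ 0) (hrs : ρ ^ 3 - σ ^ 3 ≠ 0) (f : Expo →₀ ℂ)
    (h : ev hρ hσ (pbwMap ρ σ f) = 0) : f = 0 := by
  by_contra hf
  obtain ⟨g, hg, hmax⟩ := Finset.exists_max_image f.support (fun g => g.2.2.2.2)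
    (Finsupp.support_nonempty_iff.2 hf)
  rw [pbwMap, Finsupp.linearCombination_apply, Finsupp.sum, map_sum] at h
  have h1 := DFunLike.congr_fun h (g.1, g.2.1, g.2.2.1 + g.2.2.2.1, g.2.2.2.1, g.2.2.2.2)
  rw [Finsupp.finsetSum_apply, Finset.sum_eq_single g] at h1
  · obtain ⟨t, ht, R, hR, hev⟩ := lead_pbw hρ hσ hrs g
    rw [map_smul, hev, Finsupp.smul_apply, Finsupp.add_apply, Finsupp.single_eq_same,
      (Finsupp.mem_supported' _ _).1 hR _ (by simp)] at h1
    simp [ht, Finsupp.mem_support_iff.1 hg] at h1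
  · intro g' hg' hne
    obtain ⟨t, ht, R, hR, hev⟩ := lead_pbw hρ hσ hrs g'
    have hle := hmax g' hg'
    rw [map_smul, hev, Finsupp.smul_apply, Finsupp.add_apply, Finsupp.single_eq_of_ne,
      (Finsupp.mem_supported' _ _).1 hR _ (by simpa using hle)]
    · simp
    · intro e
      apply hne
      simp only [Prod.mk.injEq] at e
      obtain ⟨e1, e2, e3, e4, e5⟩ := e
      ext <;> omega
  · intro hg'
    exact absurd hg hg'

lemma pbwMap_injective (hρ : ρ ≠ 0) (hσ : σ ≠ 0) (hrs : ρ ^ 3 - σ ^ 3 ≠ 0) :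
    Function.Injective (pbwMap ρ σ) := by
  rw [injective_iff_map_eq_zero]
  intro f hf
  exact ev_pbwMap_injective hρ hσ hrs f (by rw [hf, map_zero])

lemma ev_injective (hρ : ρ ≠ 0) (hσ : σ ≠ 0) (hrs : ρ ^ 3 - σ ^ 3 ≠ 0) :
    Function.Injective (ev hρ hσ) := by
  rw [injective_iff_map_eq_zero]
  intro v hv
  obtain ⟨f, rfl⟩ := pbwMap_surjective hρ hσ v
  rw [ev_pbwMap_injective hρ hσ hrs f hv, map_zero]

/-! ### Units and weight vectors -/

lemma V_eq_zero_of_mul (hρ : ρ ≠ 0) (hσ : σ ≠ 0) (hrs : ρ ^ 3 - σ ^ 3 ≠ 0) {v w : Vsl3 ρ σ}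
    (h : v * w = 0) : v = 0 ∨ w = 0 := by
  have h1 : tL ρ σ (ev hρ hσ v) (ev hρ hσ w) = 0 := by rw [← ev_mul, h, map_zero]
  refine (tL_eq_zero hρ hσ h1).imp ?_ ?_ <;>
  · intro h2
    exact ev_injective hρ hσ hrs (by rw [h2, map_zero])

/-- The units of the algebra are the nonzero multiples of the monomials `K₁ᵐ K₂ⁿ`. -/
lemma V_unit (hρ : ρ ≠ 0) (hσ : σ ≠ 0) (hrs : ρ ^ 3 - σ ^ 3 ≠ 0) {v w : Vsl3 ρ σ}
    (h : v * w = 1) : ∃ (t : ℂ) (m n : ℤ), t ≠ 0 ∧ v = t • (uK ρ σ m n : Vsl3 ρ σ) := by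
  have h1 : tL ρ σ (ev hρ hσ v) (ev hρ hσ w) = Finsupp.single 0 1 := by
    rw [← ev_mul, h, ev_one]
  obtain ⟨t, m, n, ht, hv⟩ := tL_unit hρ hσ h1
  refine ⟨t, m, n, ht, ev_injective hρ hσ hrs ?_⟩
  rw [hv, map_smul, ev_apply, torusRep_uK, tX_single]
  simp [cc, qr, qs]

/-- In the PBW expansion of an eigenvector of conjugation by `K₁ᵐ K₂ⁿ`, only monomials with that
eigenvalue occur. -/
lemma wt_of_mem_support (hρ : ρ ≠ 0) (hσ : σ ≠ 0) (hrs : ρ ^ 3 - σ ^ 3 ≠ 0) {f : Expo →₀ ℂ}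
    {m n : ℤ} {c : ℂ} (h : (uK ρ σ m n : Vsl3 ρ σ) * pbwMap ρ σ f
      = c • (pbwMap ρ σ f * (uK ρ σ m n : Vsl3 ρ σ))) {g : Expo} (hg : g ∈ f.support) :
    wt ρ σ m n (dg₁ g) (dg₂ g) = c := by
  let D : (Expo →₀ ℂ) →ₗ[ℂ] (Expo →₀ ℂ) := Finsupp.linearCombination ℂ
    (fun g => Finsupp.single g (wt ρ σ m n (dg₁ g) (dg₂ g)))
  have hD : ∀ f : Expo →₀ ℂ, (uK ρ σ m n : Vsl3 ρ σ) * pbwMap ρ σ f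
      = pbwMap ρ σ (D f) * (uK ρ σ m n : Vsl3 ρ σ) := by
    intro f
    induction f using Finsupp.induction_linear with
    | zero => simp
    | add f₁ f₂ h₁ h₂ => simp only [map_add, mul_add, add_mul, h₁, h₂]
    | single g t =>
      simp only [D, Finsupp.linearCombination_single, map_smul, pbwMap_single, mul_smul_comm,
        smul_mul_assoc, hasWt_pbw hρ hσ g m n]
  have hDa : ∀ f : Expo →₀ ℂ, D f g = wt ρ σ m n (dg₁ g) (dg₂ g) * f g := by
    intro f
    induction f using Finsupp.induction_linear with
    | zero => simp
    | add f₁ f₂ h₁ h₂ => simp only [map_add, Finsupp.add_apply, mul_add, h₁, h₂]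
    | single g' t =>
      simp only [D, Finsupp.linearCombination_single, Finsupp.smul_apply, smul_eq_mul]
      by_cases hgg : g = g'
      · subst hgg; simp [mul_comm]
      · simp [Finsupp.single_eq_of_ne hgg]
  rw [hD, ← smul_mul_assoc, Units.mul_left_inj, ← map_smul] at h
  have h1 := DFunLike.congr_fun (pbwMap_injective hρ hσ hrs h) g
  rw [hDa, Finsupp.smul_apply, smul_eq_mul] at h1
  exact mul_right_cancel₀ (Finsupp.mem_support_iff.1 hg) h1

lemma V_mul_eq_one_symm (hρ : ρ ≠ 0) (hσ : σ ≠ 0) (hrs : ρ ^ 3 - σ ^ 3 ≠ 0) {v w : Vsl3 ρ σ}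
    (h : v * w = 1) : w * v = 1 := by
  have h1 : (w * v - 1) * w = 0 := by rw [sub_mul, mul_assoc, h, mul_one, one_mul, sub_self]
  rcases V_eq_zero_of_mul hρ hσ hrs h1 with h2 | h2
  · exact sub_eq_zero.1 h2
  · rw [h2, mul_zero] at h
    rw [← mul_one (w * v), ← h, mul_zero]

/-! ### Rigidity of automorphisms -/

lemma exponents_eq (hρ : ρ ≠ 0) (hσ : σ ≠ 0)
    (hind : ∀ m n : ℤ, (ρ ^ 3) ^ m * (σ ^ 3) ^ n = 1 → m = 0 ∧ n = 0) {p q p' q' : ℤ}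
    (h : ρ ^ p * σ ^ q = ρ ^ p' * σ ^ q') : p = p' ∧ q = q' := by
  have h1 : ρ ^ (p - p') * σ ^ (q - q') = 1 := by
    rw [zpow_sub₀ hρ, zpow_sub₀ hσ, div_mul_div_comm, h]
    exact div_self (mul_ne_zero (zpow_ne_zero _ hρ) (zpow_ne_zero _ hσ))
  have h2 : (ρ ^ 3) ^ (p - p') * (σ ^ 3) ^ (q - q') = 1 := by
    have : ∀ (z : ℂ) (k : ℤ), (z ^ 3) ^ k = (z ^ k) ^ 3 := fun z k => by
      rw [← zpow_natCast, ← zpow_natCast, ← zpow_mul, ← zpow_mul, mul_comm]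
    rw [this, this, ← mul_pow, h1, one_pow]
  have := hind _ _ h2
  omega

lemma cube_sub_ne_zero (hσ : σ ≠ 0)
    (hind : ∀ m n : ℤ, (ρ ^ 3) ^ m * (σ ^ 3) ^ n = 1 → m = 0 ∧ n = 0) : ρ ^ 3 - σ ^ 3 ≠ 0 := by
  intro h
  have h1 := hind 1 (-1) (by
    rw [sub_eq_zero.1 h, zpow_one, zpow_neg, zpow_one]
    exact mul_inv_cancel₀ (pow_ne_zero _ hσ))
  omega

/-- If `(p, q)`, `(u, v)` are the degrees of the images of `E₁`, `E₂` and `(m₁, n₁)`, `(m₂, n₂)`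
the exponents of the images of `K₁`, `K₂`, then invariance of the weight pairing forces both to be
trivial. Write `D` for the matrix with rows `(p, q)`, `(u, v)`, and `Mρ`, `Mσ` for the matrices of
the two pairings. Invariance says that `D` commutes with `Mρ Mσ⁻¹`, an element of order three, so
nonnegativity of its entries makes `D` a scalar matrix, which is then the identity by
integrality. -/
lemma pairing_rigid {p q u v m₁ n₁ m₂ n₂ : ℤ} (hp : 0 ≤ p) (hq : 0 ≤ q) (hu : 0 ≤ u)
    (h1 : p * (m₁ - n₁) + q * (m₁ + 2 * n₁) = 1)
    (h2 : p * (-2 * m₁ - n₁) + q * (m₁ - n₁) = -2)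
    (h3 : p * (m₂ - n₂) + q * (m₂ + 2 * n₂) = -1)
    (h4 : p * (-2 * m₂ - n₂) + q * (m₂ - n₂) = -1)
    (h5 : u * (m₁ - n₁) + v * (m₁ + 2 * n₁) = 1)
    (h6 : u * (-2 * m₁ - n₁) + v * (m₁ - n₁) = 1)
    (h7 : u * (m₂ - n₂) + v * (m₂ + 2 * n₂) = 2)
    (h8 : u * (-2 * m₂ - n₂) + v * (m₂ - n₂) = -1) :
    m₁ = 1 ∧ n₁ = 0 ∧ m₂ = 0 ∧ n₂ = 1 := by
  obtain ⟨s₁, hs₁⟩ : ∃ s, s = -2 * m₁ - n₁ := ⟨_, rfl⟩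
  obtain ⟨s₂, hs₂⟩ : ∃ s, s = -2 * m₂ - n₂ := ⟨_, rfl⟩
  obtain ⟨t₁, ht₁⟩ : ∃ t, t = m₁ - n₁ := ⟨_, rfl⟩
  obtain ⟨t₂, ht₂⟩ : ∃ t, t = m₂ - n₂ := ⟨_, rfl⟩
  rw [show m₁ + 2 * n₁ = -s₁ - t₁ by omega, ← ht₁] at h1 h5
  rw [show m₂ + 2 * n₂ = -s₂ - t₂ by omega, ← ht₂] at h3 h7
  rw [← hs₁, ← ht₁] at h2 h6
  rw [← hs₂, ← ht₂] at h4 h8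
  have hdet : (p * v - q * u) * (s₁ * t₂ - s₂ * t₁) = 3 := by
    linear_combination (u * s₂ + v * t₂) * h2 - 2 * h8 - (u * s₁ + v * t₁) * h4 + h6
  have hdet0 : s₁ * t₂ - s₂ * t₁ ≠ 0 := by
    intro h
    rw [h, mul_zero] at hdet
    omega
  have e1 : (-q - u) * s₁ + (p - q - v) * t₁ = 0 := by linear_combination h1 - h6
  have e2 : (-q - u) * s₂ + (p - q - v) * t₂ = 0 := by linear_combination h3 - h8
  have e3 : (q + u) * (s₁ * t₂ - s₂ * t₁) = 0 := by linear_combination t₁ * e2 - t₂ * e1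
  have e4 : q + u = 0 := (mul_eq_zero.1 e3).resolve_right hdet0
  obtain rfl : q = 0 := by omega
  obtain rfl : u = 0 := by omega
  have hp1 : p = 1 :=
    Int.eq_one_of_dvd_one hp ⟨t₁, by linear_combination -h1⟩
  subst hp1
  omega

/-- Conjugation relations are transported by algebra endomorphisms. -/
lemma transport (θ : Vsl3 ρ σ →ₐ[ℂ] Vsl3 ρ σ) {x : Vsl3 ρ σ} {a c : ℂ} {m n m' n' : ℤ}
    (ha : a ≠ 0)
    (hK : θ (uK ρ σ m n : Vsl3 ρ σ) = a • (uK ρ σ m' n' : Vsl3 ρ σ))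
    (h : (uK ρ σ m n : Vsl3 ρ σ) * x = c • (x * (uK ρ σ m n : Vsl3 ρ σ))) :
    (uK ρ σ m' n' : Vsl3 ρ σ) * θ x = c • (θ x * (uK ρ σ m' n' : Vsl3 ρ σ)) := by
  have h1 := congrArg θ h
  rw [map_smul, map_mul, map_mul, hK, smul_mul_assoc, mul_smul_comm, smul_comm c a] at h1
  exact smul_right_injective _ ha h1

/-- A vector of the weight of `E` is a left multiple of `E`, provided that all PBW monomials of
the degree of `E` are. Conjugation by `K₁` alone determines the degree. -/
lemma exists_left_factor (hρ : ρ ≠ 0) (hσ : σ ≠ 0)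
    (hind : ∀ m n : ℤ, (ρ ^ 3) ^ m * (σ ^ 3) ^ n = 1 → m = 0 ∧ n = 0)
    {E : Vsl3 ρ σ} {e₁ e₂ : ℤ}
    (hE : ∀ g : Expo, dg₁ g = e₁ → dg₂ g = e₂ → ∃ y, pbw ρ σ g = y * E)
    {x : Vsl3 ρ σ} (hx : (uK ρ σ 1 0 : Vsl3 ρ σ) * x
      = wt ρ σ 1 0 e₁ e₂ • (x * (uK ρ σ 1 0 : Vsl3 ρ σ))) :
    ∃ y, x = y * E := by
  obtain ⟨f, rfl⟩ := pbwMap_surjective hρ hσ x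
  suffices h : pbwMap ρ σ f ∈ LinearMap.range (LinearMap.mulRight ℂ E) by
    obtain ⟨y, hy⟩ := h
    exact ⟨y, hy.symm⟩
  have hsum : pbwMap ρ σ f = ∑ g ∈ f.support, f g • pbw ρ σ g := by
    rw [pbwMap, Finsupp.linearCombination_apply, Finsupp.sum]
  rw [hsum]
  refine Submodule.sum_mem _ fun g hg => Submodule.smul_mem _ _ ?_
  have h1 := wt_of_mem_support hρ hσ (cube_sub_ne_zero hσ hind) hx hg
  have h2 := exponents_eq hρ hσ hind h1
  obtain ⟨y, hy⟩ := hE g (by omega) (by omega)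
  exact ⟨y, hy.symm⟩

/-- If an automorphism rescales `K₁`, then it maps `E` (one of `E₁`, `E₂`) to `p * E`, and its
inverse maps `E` to `q * E`; cancelling `E` shows that `p` is a unit. -/
lemma map_E_of_scale (hρ : ρ ≠ 0) (hσ : σ ≠ 0)
    (hind : ∀ m n : ℤ, (ρ ^ 3) ^ m * (σ ^ 3) ^ n = 1 → m = 0 ∧ n = 0)
    (θ : Vsl3 ρ σ ≃ₐ[ℂ] Vsl3 ρ σ) {E : Vsl3 ρ σ} {e₁ e₂ : ℤ} (hE0 : E ≠ 0) (hEw : HasWt E e₁ e₂)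
    (hE : ∀ g : Expo, dg₁ g = e₁ → dg₂ g = e₂ → ∃ y, pbw ρ σ g = y * E)
    {a : ℂ} (ha : a ≠ 0) (hK : θ (uK ρ σ 1 0 : Vsl3 ρ σ) = a • (uK ρ σ 1 0 : Vsl3 ρ σ)) :
    ∃ (b : ℂ) (m n : ℤ), b ≠ 0 ∧ θ E = b • (K₁z ρ σ m * K₂z ρ σ n * E) := by
  have hrs := cube_sub_ne_zero hσ hind
  have hK' : θ.symm (uK ρ σ 1 0 : Vsl3 ρ σ) = a⁻¹ • (uK ρ σ 1 0 : Vsl3 ρ σ) := by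
    rw [AlgEquiv.symm_apply_eq, map_smul, hK, smul_smul, inv_mul_cancel₀ ha, one_smul]
  obtain ⟨p, hp⟩ := exists_left_factor hρ hσ hind hE
    (transport (θ : Vsl3 ρ σ →ₐ[ℂ] Vsl3 ρ σ) ha hK (hEw 1 0))
  obtain ⟨q, hq⟩ := exists_left_factor hρ hσ hind hE
    (transport (θ.symm : Vsl3 ρ σ →ₐ[ℂ] Vsl3 ρ σ) (inv_ne_zero ha) hK' (hEw 1 0))
  change θ E = p * E at hp
  change θ.symm E = q * E at hq
  have h1 : (θ q * p - 1) * E = 0 := by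
    rw [AlgEquiv.symm_apply_eq, map_mul, hp, ← mul_assoc] at hq
    rw [sub_mul, one_mul, ← hq, sub_self]
  have h2 : θ q * p = 1 := sub_eq_zero.1 ((V_eq_zero_of_mul hρ hσ hrs h1).resolve_right hE0)
  obtain ⟨b, m, n, hb, rfl⟩ := V_unit hρ hσ hrs (V_mul_eq_one_symm hρ hσ hrs h2)
  exact ⟨b, m, n, hb, by rw [hp, K₁z_eq, K₂z_eq, smul_mul_assoc, uK, Units.val_mul]⟩

lemma pbw_ne_zero (hρ : ρ ≠ 0) (hσ : σ ≠ 0) (hrs : ρ ^ 3 - σ ^ 3 ≠ 0) (g : Expo) :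
    pbw ρ σ g ≠ 0 := by
  intro h
  have h1 : pbwMap ρ σ (Finsupp.single g 1) = pbwMap ρ σ 0 := by
    rw [pbwMap_single, h, smul_zero, map_zero]
  simpa using pbwMap_injective hρ hσ hrs h1

/-- The image of `E` under an automorphism has, up to the twist by the images of `K₁, K₂`, the
weight of some degree in `ℕ²`. -/
lemma exists_degree (hρ : ρ ≠ 0) (hσ : σ ≠ 0)
    (hind : ∀ m n : ℤ, (ρ ^ 3) ^ m * (σ ^ 3) ^ n = 1 → m = 0 ∧ n = 0)
    (θ : Vsl3 ρ σ ≃ₐ[ℂ] Vsl3 ρ σ) {E : Vsl3 ρ σ} {e₁ e₂ : ℤ} (hE0 : E ≠ 0) (hEw : HasWt E e₁ e₂)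
    {a₁ a₂ : ℂ} (ha₁ : a₁ ≠ 0) (ha₂ : a₂ ≠ 0) {m₁ n₁ m₂ n₂ : ℤ}
    (hK₁ : θ (uK ρ σ 1 0 : Vsl3 ρ σ) = a₁ • (uK ρ σ m₁ n₁ : Vsl3 ρ σ))
    (hK₂ : θ (uK ρ σ 0 1 : Vsl3 ρ σ) = a₂ • (uK ρ σ m₂ n₂ : Vsl3 ρ σ)) :
    ∃ p q : ℤ, 0 ≤ p ∧ 0 ≤ q ∧
      (p * (m₁ - n₁) + q * (m₁ + 2 * n₁) = e₁ + e₂ ∧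
        p * (-2 * m₁ - n₁) + q * (m₁ - n₁) = -2 * e₁ + e₂) ∧
      (p * (m₂ - n₂) + q * (m₂ + 2 * n₂) = - e₁ + 2 * e₂ ∧
        p * (-2 * m₂ - n₂) + q * (m₂ - n₂) = - e₁ - e₂) := by
  have hrs := cube_sub_ne_zero hσ hind
  have h1 := transport (θ : Vsl3 ρ σ →ₐ[ℂ] Vsl3 ρ σ) ha₁ hK₁ (hEw 1 0)
  have h2 := transport (θ : Vsl3 ρ σ →ₐ[ℂ] Vsl3 ρ σ) ha₂ hK₂ (hEw 0 1)
  change _ * θ E = _ • (θ E * _) at h1 h2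
  obtain ⟨f, hf⟩ := pbwMap_surjective hρ hσ (θ E)
  have hf0 : f ≠ 0 := by
    rintro rfl
    rw [map_zero] at hf
    exact hE0 ((map_eq_zero_iff θ θ.injective).1 hf.symm)
  rw [← hf] at h1 h2
  obtain ⟨g, hg⟩ := Finsupp.support_nonempty_iff.2 hf0
  have w1 := exponents_eq hρ hσ hind (wt_of_mem_support hρ hσ hrs h1 hg)
  have w2 := exponents_eq hρ hσ hind (wt_of_mem_support hρ hσ hrs h2 hg)
  refine ⟨dg₁ g, dg₂ g, by simp only [dg₁]; positivity, by simp only [dg₂]; positivity,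
    ⟨?_, ?_⟩, ⟨?_, ?_⟩⟩
  · rw [w1.1]; ring
  · rw [w1.2]; ring
  · rw [w2.1]; ring
  · rw [w2.2]; ring

end Algebra

/-- for any `ℂ`-algebra automorphism `θ` of `Ǔ^{≥0}_{r,s}(sl₃)`, the
generators `E₁`, `E₂` cannot be exchanged: `θ(K_l) = a_l K_l` and
`θ(E_l) = b_l K₁^{m_l} K₂^{n_l} E_l` for `l = 1, 2`. -/
theorem stmt8 (ρ σ : ℂ) (hρ : ρ ≠ 0) (hσ : σ ≠ 0)
    (hind : ∀ m n : ℤ, (ρ ^ 3) ^ m * (σ ^ 3) ^ n = 1 → m = 0 ∧ n = 0)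
    (θ : Vsl3 ρ σ ≃ₐ[ℂ] Vsl3 ρ σ) :
    ∃ (a b : Fin 2 → ℂ) (m n : Fin 2 → ℤ),
      (∀ l, a l ≠ 0) ∧ (∀ l, b l ≠ 0) ∧
      (∀ l, θ (Kvec ρ σ l) = a l • Kvec ρ σ l) ∧
      ∀ l, θ (Evec ρ σ l) = b l • (K₁z ρ σ (m l) * K₂z ρ σ (n l) * Evec ρ σ l) := by
  have hrs := cube_sub_ne_zero hσ hind
  have hE₁ : vE₁ ρ σ ≠ 0 := by
    simpa [pbw, uK] using pbw_ne_zero hρ hσ hrs (0, 0, 0, 0, 1)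
  have hE₂ : vE₂ ρ σ ≠ 0 := by
    simpa [pbw, uK] using pbw_ne_zero hρ hσ hrs (0, 0, 1, 0, 0)
  have hunit : ∀ u : (Vsl3 ρ σ)ˣ, θ u * θ (u⁻¹ : (Vsl3 ρ σ)ˣ) = 1 := fun u => by
    rw [← map_mul, Units.mul_inv, map_one]
  obtain ⟨a₁, m₁, n₁, ha₁, hK₁⟩ := V_unit hρ hσ hrs (hunit (uK ρ σ 1 0))
  obtain ⟨a₂, m₂, n₂, ha₂, hK₂⟩ := V_unit hρ hσ hrs (hunit (uK ρ σ 0 1))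
  obtain ⟨p, q, hp, hq, ⟨h1, h2⟩, h3, h4⟩ :=
    exists_degree hρ hσ hind θ hE₁ (hasWt_E₁ hρ hσ) ha₁ ha₂ hK₁ hK₂
  obtain ⟨u, v, hu, -, ⟨h5, h6⟩, h7, h8⟩ :=
    exists_degree hρ hσ hind θ hE₂ (hasWt_E₂ hρ hσ) ha₁ ha₂ hK₁ hK₂
  obtain ⟨rfl, rfl, rfl, rfl⟩ := pairing_rigid hp hq hu h1 h2 h3 h4 h5 h6 h7 h8
  obtain ⟨b₁, i₁, j₁, hb₁, hθ₁⟩ := map_E_of_scale hρ hσ hind θ hE₁ (hasWt_E₁ hρ hσ) (by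
    rintro ⟨m, n, j, k, i⟩ hg₁ hg₂
    simp only [dg₁, dg₂] at hg₁ hg₂
    obtain rfl : j = 0 := by omega
    obtain rfl : k = 0 := by omega
    obtain rfl : i = 1 := by omega
    exact ⟨uK ρ σ m n, by simp [pbw]⟩) ha₁ hK₁
  obtain ⟨b₂, i₂, j₂, hb₂, hθ₂⟩ := map_E_of_scale hρ hσ hind θ hE₂ (hasWt_E₂ hρ hσ) (by
    rintro ⟨m, n, j, k, i⟩ hg₁ hg₂
    simp only [dg₁, dg₂] at hg₁ hg₂
    obtain rfl : k = 0 := by omega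
    obtain rfl : j = 1 := by omega
    obtain rfl : i = 0 := by omega
    exact ⟨uK ρ σ m n, by simp [pbw]⟩) ha₁ hK₁
  rw [uK_one_zero] at hK₁
  rw [uK_zero_one] at hK₂
  refine ⟨![a₁, a₂], ![b₁, b₂], ![i₁, i₂], ![j₁, j₂], ?_, ?_, ?_, ?_⟩ <;>
    rw [Fin.forall_fin_two]
  · exact ⟨ha₁, ha₂⟩
  · exact ⟨hb₁, hb₂⟩
  · exact ⟨hK₁, hK₂⟩
  · exact ⟨hθ₁, hθ₂⟩
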